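/- arXiv:0709.3349 — 3 statements merged into one kernel-verified Lean document; each statement's English description precedes it below -/
import Mathlib

section
/- Let $A$ be a nonempty bounded measurable subset of $\mathbb{R}^n$ ($n \geq 1$) contained in the closed ball $B(q_0, R)$ for some $q_0 \in \mathbb{R}^n$ and $R > 0$, and let $G \colon \mathbb{R} \to \mathbb{R}$ be continuous on $[0, 2R]$ and strictly positive on $(0, 2R)$. Then there exists a point $p$ in the closed convex hull of $A$ such that $\int_A G(\lVert x - p \rVert)\,(x - p)\, d\lambda(x) = 0$, where $\lambda$ is Lebesgue measure and the integral is the Bochner integral of the $\mathbb{R}^n$-valued integrand. -/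
open MeasureTheory

/-!
The map `p ↦ ∫ g ‖x - p‖ • (x - p) ∂μ` is minus the gradient of the mean over `x` of a radial
potential at `x - p`. On a compact convex set `K` carrying `μ`, this mean potential attains its
minimum at some `p`; let `V` be the value of the map there. Minimality gives `⟪V, y - p⟫ ≤ 0` for
every `y ∈ K`. Integrating this inequality with weight `g ‖y - p‖ ≥ 0` gives `⟪V, V⟫ ≤ 0`.
-/

theorem exists_continuous_nonneg_eqOn_Icc {a b : ℝ} (hab : a < b) {f : ℝ → ℝ}
    (hf : ContinuousOn f (Set.Icc a b)) (hf0 : ∀ t ∈ Set.Ioo a b, 0 ≤ f t) :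
    ∃ g : ℝ → ℝ, Continuous g ∧ (∀ t, 0 ≤ g t) ∧ Set.EqOn g f (Set.Icc a b) := by
  have hf0' : ∀ t ∈ Set.Icc a b, 0 ≤ f t := by
    rw [← closure_Ioo hab.ne] at hf ⊢
    exact fun t ht => le_on_closure hf0 continuousOn_const hf ht
  exact ⟨Set.IccExtend hab.le ((Set.Icc a b).domRestrict f), hf.domRestrict.Icc_extend',
    fun t => hf0' _ (Set.projIcc a b hab.le t).2, fun t ht => Set.IccExtend_of_mem hab.le _ ht⟩

theorem integrable_of_continuous_of_ae_mem_isCompact {X F : Type*} [TopologicalSpace X]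
    [TopologicalSpace.MetrizableSpace X] [MeasurableSpace X] [OpensMeasurableSpace X]
    [NormedAddCommGroup F] {μ : Measure X} [IsFiniteMeasureOnCompacts μ] {K : Set X}
    (hK : IsCompact K) (hμK : ∀ᵐ x ∂μ, x ∈ K) {f : X → F} (hf : Continuous f) :
    Integrable f μ := by
  rw [← Measure.restrict_eq_self_of_ae_mem hμK]
  exact hf.continuousOn.integrableOn_compact hK

theorem exists_bound_norm_smul_self {F : Type*} [SeminormedAddCommGroup F] [NormedSpace ℝ F]
    {g : ℝ → ℝ} (hg : Continuous g) (M : ℝ) : ∃ C, ∀ u : F, ‖u‖ ≤ M → ‖g ‖u‖ • u‖ ≤ C := by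
  obtain ⟨C, hC⟩ := (isCompact_Icc (a := 0) (b := M)).exists_bound_of_continuousOn
    (hg.mul continuous_id).continuousOn
  refine ⟨C, fun u hu => ?_⟩
  simpa [norm_smul] using hC ‖u‖ ⟨norm_nonneg u, hu⟩

theorem inner_gradient_sub_nonneg_of_isMinOn {E : Type*} [NormedAddCommGroup E]
    [InnerProductSpace ℝ E] [CompleteSpace E] {f : E → ℝ} {K : Set E} {p y f' : E}
    (hK : Convex ℝ K) (hmin : IsMinOn f K p) (hf : HasGradientAt f f' p) (hp : p ∈ K)
    (hy : y ∈ K) : 0 ≤ inner ℝ f' (y - p) := by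
  simpa using hmin.localize.hasFDerivWithinAt_nonneg hf.hasFDerivAt.hasFDerivWithinAt
    (sub_mem_posTangentConeAt_of_segment_subset (hK.segment_subset hp hy))

section RadialPotential

variable {E : Type*} [NormedAddCommGroup E] [InnerProductSpace ℝ E] {g : ℝ → ℝ}

/-- The potential of the central force field `u ↦ g ‖u‖ • u`, namely `∫₀^‖u‖ r g(r) dr`, written
in the variable `s = r ^ 2`: unlike `‖u‖`, the endpoint `‖u‖ ^ 2` is differentiable at `0`. -/
noncomputable def radialPotential (g : ℝ → ℝ) (u : E) : ℝ :=
  ∫ s in (0 : ℝ)..‖u‖ ^ 2, g (√s) / 2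

theorem hasFDerivAt_radialPotential (hg : Continuous g) (u : E) :
    HasFDerivAt (radialPotential g) (innerSL ℝ (g ‖u‖ • u)) u := by
  have hc : Continuous fun s => g (√s) / 2 := by fun_prop
  have hprim := (hc.integral_hasStrictDerivAt 0 (‖u‖ ^ 2)).hasDerivAt
  refine (hprim.comp_hasFDerivAt u (hasStrictFDerivAt_norm_sq u).hasFDerivAt).congr_fderiv ?_
  ext v
  simp only [Real.sqrt_sq (norm_nonneg u), smul_apply, coe_innerSL_apply, nsmul_eq_mul,
    Nat.cast_ofNat, smul_eq_mul, map_smul]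
  ring

theorem hasFDerivAt_radialPotential_sub (hg : Continuous g) (x p : E) :
    HasFDerivAt (fun q => radialPotential g (x - q)) (-innerSL ℝ (g ‖x - p‖ • (x - p))) p := by
  refine ((hasFDerivAt_radialPotential hg (x - p)).comp p
    ((hasFDerivAt_id p).const_sub x)).congr_fderiv ?_
  ext v
  simp

theorem continuous_radialPotential (hg : Continuous g) :
    Continuous (radialPotential g : E → ℝ) :=
  continuous_iff_continuousAt.2 fun u => (hasFDerivAt_radialPotential hg u).continuousAt

variable [CompleteSpace E] [MeasurableSpace E] [OpensMeasurableSpace E] {μ : Measure E}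
  [IsFiniteMeasure μ] {K : Set E}

theorem hasGradientAt_integral_radialPotential_sub (hK : IsCompact K) (hμK : ∀ᵐ x ∂μ, x ∈ K)
    (hg : Continuous g) (p : E) :
    HasGradientAt (fun q => ∫ x, radialPotential g (x - q) ∂μ)
      (-∫ x, g ‖x - p‖ • (x - p) ∂μ) p := by
  have hpot (q : E) : Integrable (fun x => radialPotential g (x - q)) μ :=
    integrable_of_continuous_of_ae_mem_isCompact hK hμK
      ((continuous_radialPotential hg).comp (continuous_sub_right q))
  have hforce : Integrable (fun x => g ‖x - p‖ • (x - p)) μ :=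
    integrable_of_continuous_of_ae_mem_isCompact hK hμK (by fun_prop)
  have hforce' : Integrable (fun x => -innerSL ℝ (g ‖x - p‖ • (x - p))) μ :=
    integrable_of_continuous_of_ae_mem_isCompact hK hμK (by fun_prop)
  obtain ⟨M, hM⟩ := hK.isBounded.subset_closedBall p
  obtain ⟨C, hC⟩ := exists_bound_norm_smul_self (F := E) hg (M + 1)
  have hbound : ∀ᵐ x ∂μ, ∀ q ∈ Metric.ball p 1, ‖-innerSL ℝ (g ‖x - q‖ • (x - q))‖ ≤ C := by
    filter_upwards [hμK] with x hx q hq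
    rw [norm_neg, innerSL_apply_norm]
    refine hC _ ?_
    rw [← dist_eq_norm]
    exact (dist_triangle_right x q p).trans (add_le_add (hM hx) (Metric.mem_ball.1 hq).le)
  have hderiv := hasFDerivAt_integral_of_dominated_of_fderiv_le (Metric.ball_mem_nhds p one_pos)
    (.of_forall fun q => (hpot q).aestronglyMeasurable) (hpot p) hforce'.aestronglyMeasurable
    hbound (integrable_const C)
    (.of_forall fun x q _ => hasFDerivAt_radialPotential_sub hg x q)
  refine hasGradientAt_iff_hasFDerivAt.2 (hderiv.congr_fderiv ?_)
  ext v
  have hinner : ∫ x, inner ℝ (g ‖x - p‖ • (x - p)) v ∂μ =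
      inner ℝ (∫ x, g ‖x - p‖ • (x - p) ∂μ) v := by
    simp_rw [real_inner_comm v, integral_inner hforce]
  rw [ContinuousLinearMap.integral_apply hforce', InnerProductSpace.toDual_apply_apply,
    inner_neg_left, ← hinner, ← integral_neg]
  simp only [neg_apply, innerSL_apply_apply]

end RadialPotential

section CenterOfMass

variable {E : Type*} [NormedAddCommGroup E] [InnerProductSpace ℝ E] [CompleteSpace E]
  [MeasurableSpace E] [OpensMeasurableSpace E] {μ : Measure E}

theorem exists_mem_integral_smul_sub_eq_zero [IsFiniteMeasure μ] {K : Set E} (hK : IsCompact K)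
    (hKconv : Convex ℝ K) (hKne : K.Nonempty) (hμK : ∀ᵐ x ∂μ, x ∈ K) {g : ℝ → ℝ}
    (hg : Continuous g) (hg0 : ∀ t, 0 ≤ g t) :
    ∃ p ∈ K, ∫ x, g ‖x - p‖ • (x - p) ∂μ = 0 := by
  have hgrad := hasGradientAt_integral_radialPotential_sub hK hμK hg
  obtain ⟨p, hp, hmin⟩ := hK.exists_isMinOn hKne
    (f := fun q => ∫ x, radialPotential g (x - q) ∂μ) fun q _ =>
      (hgrad q).continuousAt.continuousWithinAt
  refine ⟨p, hp, ?_⟩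
  set V := ∫ x, g ‖x - p‖ • (x - p) ∂μ with hV
  have hvar {y : E} (hy : y ∈ K) : inner ℝ V (y - p) ≤ 0 := by
    simpa using inner_gradient_sub_nonneg_of_isMinOn hKconv hmin (hgrad p) hp hy
  have hint : Integrable (fun x => g ‖x - p‖ • (x - p)) μ :=
    integrable_of_continuous_of_ae_mem_isCompact hK hμK (by fun_prop)
  have hVV : inner ℝ V V ≤ 0 :=
    calc inner ℝ V V = ∫ x, g ‖x - p‖ * inner ℝ V (x - p) ∂μ := by
          simp_rw [← real_inner_smul_right, integral_inner hint, hV]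
      _ ≤ 0 := integral_nonpos_of_ae <| hμK.mono fun x hx =>
          mul_nonpos_of_nonneg_of_nonpos (hg0 _) (hvar hx)
  exact inner_self_eq_zero.1 (hVV.antisymm real_inner_self_nonneg)

theorem center_of_mass_euclidean_general {A : Set E} (hA : A.Nonempty) (hAtb : TotallyBounded A)
    (hμA : μ A ≠ ⊤) {G : ℝ → ℝ} (hGcont : ContinuousOn G (Set.Icc 0 (Metric.diam A)))
    (hG0 : ∀ t ∈ Set.Ioo 0 (Metric.diam A), 0 ≤ G t) :
    ∃ p ∈ closure (convexHull ℝ A), ∫ x in A, G ‖x - p‖ • (x - p) ∂μ = 0 := by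
  have hAK : A ⊆ closure (convexHull ℝ A) := (subset_convexHull ℝ A).trans subset_closure
  obtain ⟨a, ha⟩ := hA
  obtain rfl | hAnt := Set.eq_singleton_or_nontrivial ha
  · exact ⟨a, hAK ha, by simp⟩
  obtain ⟨g, hg, hg0, hgG⟩ := exists_continuous_nonneg_eqOn_Icc
    (Metric.diam_pos hAnt hAtb.isBounded) hGcont hG0
  have hK : IsCompact (closure (convexHull ℝ A)) :=
    (totallyBounded_convexHull.2 hAtb).closure.isCompact_of_isClosed isClosed_closure
  have hdiam : Metric.diam (closure (convexHull ℝ A)) = Metric.diam A := by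
    rw [Metric.diam_closure, convexHull_diam]
  have hμK : ∀ᵐ x ∂μ.restrict A, x ∈ closure (convexHull ℝ A) :=
    ae_mono (Measure.restrict_mono hAK le_rfl) (ae_restrict_mem hK.measurableSet)
  have : IsFiniteMeasure (μ.restrict A) := isFiniteMeasure_restrict.2 hμA
  obtain ⟨p, hp, hp0⟩ := exists_mem_integral_smul_sub_eq_zero hK
    (convex_convexHull ℝ A).closure ⟨a, hAK ha⟩ hμK hg hg0
  refine ⟨p, hp, hp0 ▸ integral_congr_ae (hμK.mono fun x hx => ?_)⟩
  have hdist : ‖x - p‖ ≤ Metric.diam A := by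
    rw [← hdiam, ← dist_eq_norm]
    exact Metric.dist_le_diam_of_mem hK.isBounded hx hp
  simp only [hgG ⟨norm_nonneg _, hdist⟩]

end CenterOfMass

/-- Euclidean case of the center-of-mass theorem: for a nonempty bounded measurable
set `A ⊆ closedBall q₀ R` and a mass distribution function `G` continuous on `[0, 2R]`
and positive on `(0, 2R)`, there is a point `p` in the closed convex hull of `A` with
`∫_A G(‖x - p‖) (x - p) dx = 0`. -/
theorem center_of_mass_euclidean
    {n : ℕ} (hn : 1 ≤ n) (A : Set (EuclideanSpace ℝ (Fin n)))
    (hA : A.Nonempty) (hAmeas : MeasurableSet A)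
    (q₀ : EuclideanSpace ℝ (Fin n)) (R : ℝ) (hR : 0 < R)
    (hAball : A ⊆ Metric.closedBall q₀ R)
    (G : ℝ → ℝ) (hGcont : ContinuousOn G (Set.Icc 0 (2 * R)))
    (hGpos : ∀ t ∈ Set.Ioo 0 (2 * R), 0 < G t) :
    ∃ p ∈ closure (convexHull ℝ A),
      ∫ x in A, G ‖x - p‖ • (x - p) = 0 := by
  have hdiam : Metric.diam A ≤ 2 * R := Metric.diam_le_of_subset_closedBall hR.le hAball
  exact center_of_mass_euclidean_general hA
    ((isCompact_closedBall q₀ R).totallyBounded.subset hAball)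
    (measure_ne_top_of_subset hAball (isCompact_closedBall q₀ R).measure_ne_top)
    (hGcont.mono (Set.Icc_subset_Icc_right hdiam))
    fun t ht => (hGpos t (Set.Ioo_subset_Ioo_right hdiam ht)).le
end

section
/- Let $\mu$ be a nonzero finite Borel measure on $\mathbb{R}^n$ with bounded support such that $\mu(\{q\}) = 0$ for every $q \in \mathbb{R}^n$. Then there exists a point $p$ in the closed convex hull of the support of $\mu$ such that $\int_{\mathbb{R}^n} u(x - p)\, d\mu(x) = 0$, where $u(y) = y / \lVert y \rVert$ for $y \neq 0$ and $u(0) = 0$. -/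
open MeasureTheory

/-- The (topological) support of a measure: the set of points all of whose
neighbourhoods have positive measure. -/
def measureSupport {α : Type*} [TopologicalSpace α] [MeasurableSpace α] (μ : Measure α) : Set α :=
  {x | ∀ U ∈ nhds x, μ U ≠ 0}

/-!
A center of mass is a critical point of the distance potential `p ↦ ∫ (‖x - p‖ - ‖x‖) dμ(x)`.
Dominated convergence shows that the potential is differentiable at every non-atom of `μ`, with
gradient `-∫ (x - p)/‖x - p‖ dμ(x)`, and that it grows like `μ(E) ‖p‖` at infinity. It therefore
attains its minimum, where the gradient vanishes. The minimizer lies in every closed convex set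
carrying `μ`: otherwise a linear functional separating it from the set would be positive on almost
all the unit vectors `(x - p)/‖x - p‖`, and so on their integral.
-/

open Filter Topology Bornology NormedSpace

section DistancePotential

variable {E : Type*} [SeminormedAddCommGroup E]

theorem abs_norm_sub_sub_norm_le (x p : E) : |‖x - p‖ - ‖x‖| ≤ ‖p‖ := by
  simpa using abs_norm_sub_norm_le (x - p) x

theorem lipschitzWith_norm_sub_sub_norm (x : E) : LipschitzWith 1 fun p => ‖x - p‖ - ‖x‖ :=
  .of_le_add fun p q => by
    linarith [dist_eq_norm x p, dist_eq_norm x q, dist_triangle_right x p q]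

theorem tendsto_norm_sub_sub_norm_div_norm_cobounded (x : E) :
    Tendsto (fun p => (‖x - p‖ - ‖x‖) / ‖p‖) (cobounded E) (𝓝 1) := by
  have hzero (c : ℝ) : Tendsto (fun p : E => c / ‖p‖) (cobounded E) (𝓝 0) :=
    tendsto_norm_cobounded_atTop.const_div_atTop c
  have hlower : Tendsto (fun p : E => 1 - 2 * ‖x‖ / ‖p‖) (cobounded E) (𝓝 1) := by
    simpa using (hzero (2 * ‖x‖)).const_sub 1
  refine tendsto_of_tendsto_of_tendsto_of_le_of_le' hlower tendsto_const_nhds ?_ ?_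
  · filter_upwards [tendsto_norm_cobounded_atTop.eventually_gt_atTop 0] with p hp
    rw [one_sub_div hp.ne', div_le_div_iff_of_pos_right hp]
    linarith [norm_sub_norm_le p x, norm_sub_rev x p]
  · exact .of_forall fun p =>
      div_le_one_of_le₀ (le_of_abs_le (abs_norm_sub_sub_norm_le x p)) (norm_nonneg p)

variable [MeasurableSpace E]

/-- The potential `p ↦ ∫ ‖x - p‖ dμ(x)` of the distance, to be minimized in the search for a center
of mass. The constant `∫ ‖x‖ dμ(x)` is subtracted under the integral sign, which makes the
integrand bounded, so that `μ` needs no finite first moment. -/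
noncomputable def distancePotential (μ : Measure E) (p : E) : ℝ :=
  ∫ x, (‖x - p‖ - ‖x‖) ∂μ

theorem integrable_norm_sub_sub_norm [OpensMeasurableSpace E] (μ : Measure E) [IsFiniteMeasure μ]
    (p : E) : Integrable (fun x => ‖x - p‖ - ‖x‖) μ :=
  .of_bound (by fun_prop) ‖p‖ (.of_forall fun x => abs_norm_sub_sub_norm_le x p)

theorem tendsto_distancePotential_div_norm_cobounded [OpensMeasurableSpace E] (μ : Measure E)
    [IsFiniteMeasure μ] :
    Tendsto (fun p => distancePotential μ p / ‖p‖) (cobounded E) (𝓝 (μ.real Set.univ)) := by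
  have : (cobounded E).IsCountablyGenerated := comap_norm_atTop (E := E) ▸ inferInstance
  have hlim : Tendsto (fun p => ∫ x, (‖x - p‖ - ‖x‖) / ‖p‖ ∂μ) (cobounded E) (𝓝 (∫ _, 1 ∂μ)) := by
    refine tendsto_integral_filter_of_dominated_convergence (fun _ => 1)
      (.of_forall fun p => ((integrable_norm_sub_sub_norm μ p).div_const ‖p‖).aestronglyMeasurable)
      (.of_forall fun p => .of_forall fun x => ?_) (integrable_const 1)
      (.of_forall tendsto_norm_sub_sub_norm_div_norm_cobounded)
    rw [norm_div, norm_norm]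
    exact div_le_one_of_le₀ (abs_norm_sub_sub_norm_le x p) (norm_nonneg p)
  simpa only [integral_div, integral_const, smul_eq_mul, mul_one, distancePotential] using hlim

theorem tendsto_distancePotential_cobounded_atTop [OpensMeasurableSpace E] (μ : Measure E)
    [IsFiniteMeasure μ] [NeZero μ] :
    Tendsto (distancePotential μ) (cobounded E) atTop := by
  refine ((tendsto_distancePotential_div_norm_cobounded μ).pos_mul_atTop
    measureReal_univ_pos tendsto_norm_cobounded_atTop).congr' ?_
  filter_upwards [tendsto_norm_cobounded_atTop.eventually_gt_atTop 0] with p hp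
  exact div_mul_cancel₀ _ hp.ne'

end DistancePotential

section UnitField

variable {E : Type*} [NormedAddCommGroup E] [NormedSpace ℝ E]

theorem norm_normalize_le_one (x : E) : ‖normalize x‖ ≤ 1 := by
  rw [NormedSpace.normalize, norm_smul, norm_inv, norm_norm]
  exact inv_mul_le_one

variable [MeasurableSpace E] [BorelSpace E] [SecondCountableTopology E]

theorem measurable_normalize : Measurable (normalize : E → E) := by
  unfold NormedSpace.normalize
  fun_prop

theorem integrable_normalize_sub (μ : Measure E) [IsFiniteMeasure μ] (p : E) :
    Integrable (fun x => normalize (x - p)) μ :=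
  .of_bound (measurable_normalize.comp (measurable_sub_const p)).aestronglyMeasurable 1
    (.of_forall fun x => norm_normalize_le_one (x - p))

theorem mem_of_integral_normalize_sub_eq_zero [CompleteSpace E] {μ : Measure E} [IsFiniteMeasure μ]
    [NeZero μ] {K : Set E} (hKconvex : Convex ℝ K) (hKclosed : IsClosed K)
    (hμK : ∀ᵐ x ∂μ, x ∈ K) {p : E} (hp : ∫ x, normalize (x - p) ∂μ = 0) : p ∈ K := by
  by_contra hpK
  obtain ⟨f, c, hfp, hfK⟩ := geometric_hahn_banach_point_closed hKconvex hKclosed hpK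
  have hpos : ∀ᵐ x ∂μ, 0 < f (normalize (x - p)) := by
    filter_upwards [hμK] with x hx
    have hxp : x - p ≠ 0 := sub_ne_zero.2 (ne_of_mem_of_not_mem hx hpK)
    rw [NormedSpace.normalize, map_smul, map_sub, smul_eq_mul]
    exact mul_pos (inv_pos.2 (norm_pos_iff.2 hxp)) (sub_pos.2 (hfp.trans (hfK x hx)))
  have hint := integrable_normalize_sub μ p
  have hzero : ∫ x, f (normalize (x - p)) ∂μ = 0 := by
    rw [f.integral_comp_comm hint, hp, map_zero]
  have hae : (fun x => f (normalize (x - p))) =ᵐ[μ] 0 :=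
    (integral_eq_zero_iff_of_nonneg_ae (hpos.mono fun _ => le_of_lt)
      (f.integrable_comp hint)).1 hzero
  obtain ⟨x, hx, hx'⟩ := (hpos.and hae).exists
  exact hx.ne' hx'

end UnitField

section Gradient

variable {E : Type*} [NormedAddCommGroup E] [InnerProductSpace ℝ E] [CompleteSpace E]

theorem hasGradientAt_norm {x : E} (hx : x ≠ 0) :
    HasGradientAt (fun y : E => ‖y‖) (normalize x) x := by
  have hsqrt := (hasStrictFDerivAt_norm_sq x).hasFDerivAt.sqrt (by positivity)
  simp only [Real.sqrt_sq (norm_nonneg _)] at hsqrt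
  rw [hasGradientAt_iff_hasFDerivAt]
  convert! hsqrt using 1
  ext y
  simp only [NormedSpace.normalize, map_smul, smul_apply, InnerProductSpace.toDual_apply_apply,
    smul_eq_mul, one_div, mul_inv_rev, coe_innerSL_apply, nsmul_eq_mul, Nat.cast_ofNat]
  ring

theorem hasGradientAt_norm_sub_left {x p : E} (hxp : x ≠ p) :
    HasGradientAt (fun q => ‖x - q‖) (-normalize (x - p)) p := by
  have hcomp := (hasGradientAt_norm (sub_ne_zero.2 hxp)).hasFDerivAt.comp p
    ((hasFDerivAt_id p).const_sub x)
  rw [hasGradientAt_iff_hasFDerivAt]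
  convert! hcomp using 1
  ext y
  simp

variable [MeasurableSpace E] [BorelSpace E] [SecondCountableTopology E]

theorem hasGradientAt_distancePotential {μ : Measure E} [IsFiniteMeasure μ] {p : E}
    (hp : μ {p} = 0) :
    HasGradientAt (distancePotential μ) (-∫ x, normalize (x - p) ∂μ) p := by
  let dual := (InnerProductSpace.toDual ℝ E).toContinuousLinearEquiv.toContinuousLinearMap
  have hint : Integrable (fun x => -normalize (x - p)) μ := (integrable_normalize_sub μ p).neg
  have hne : ∀ᵐ x ∂μ, x ≠ p := by simpa [ae_iff] using hp
  have hderiv := (hasFDerivAt_integral_of_dominated_loc_of_lip (bound := fun _ => 1) univ_mem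
    (.of_forall fun q => (integrable_norm_sub_sub_norm μ q).aestronglyMeasurable)
    (integrable_norm_sub_sub_norm μ p) (dual.integrable_comp hint).aestronglyMeasurable
    (.of_forall fun x => by simpa using lipschitzWith_norm_sub_sub_norm x) (integrable_const 1)
    (hne.mono fun x hx => (hasGradientAt_norm_sub_left hx).hasFDerivAt.sub_const ‖x‖)).2
  rw [hasGradientAt_iff_hasFDerivAt, ← integral_neg]
  convert! hderiv using 1
  exact (dual.integral_comp_comm hint).symm

end Gradient

theorem measureSupport_eq_support {α : Type*} [TopologicalSpace α] [MeasurableSpace α]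
    (μ : Measure α) : measureSupport μ = μ.support := by
  ext x
  simp only [measureSupport, Set.mem_ofPred_eq, Measure.mem_support_iff_forall, pos_iff_ne_zero]

section CenterOfMass

variable {E : Type*} [NormedAddCommGroup E] [InnerProductSpace ℝ E] [FiniteDimensional ℝ E]
  [MeasurableSpace E] [BorelSpace E]

theorem exists_integral_normalize_sub_eq_zero (μ : Measure E) [IsFiniteMeasure μ] [NeZero μ]
    [NullSingletonClass μ] : ∃ p : E, ∫ x, normalize (x - p) ∂μ = 0 := by
  have hgrad (p : E) := hasGradientAt_distancePotential (measure_singleton (μ := μ) p)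
  have hcont : Continuous (distancePotential μ) :=
    continuous_iff_continuousAt.2 fun p => (hgrad p).continuousAt
  obtain ⟨p, hmin⟩ := hcont.exists_forall_le <|
    Metric.cobounded_eq_cocompact (α := E) ▸ tendsto_distancePotential_cobounded_atTop μ
  have hcrit := IsLocalMin.hasFDerivAt_eq_zero (.of_forall hmin) (hgrad p).hasFDerivAt
  exact ⟨p, by simpa using hcrit⟩

theorem center_of_mass_inverse_distance_general (μ : Measure E) [IsFiniteMeasure μ] [NeZero μ]
    [NullSingletonClass μ] :
    ∃ p ∈ closure (convexHull ℝ μ.support), ∫ x, ‖x - p‖⁻¹ • (x - p) ∂μ = 0 := by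
  obtain ⟨p, hp⟩ := exists_integral_normalize_sub_eq_zero μ
  refine ⟨p, mem_of_integral_normalize_sub_eq_zero (convex_convexHull ℝ μ.support).closure
    isClosed_closure ?_ hp, hp⟩
  filter_upwards [Measure.support_mem_ae (μ := μ)] with x hx
  exact subset_closure (subset_convexHull ℝ _ hx)

end CenterOfMass

/-- Center-of-mass with mass distribution `G(t) = 1/t`: for a nonzero finite Borel
measure `μ` on `ℝⁿ` with bounded support and no atoms, there is a point `p` in the
closed convex hull of the support of `μ` such that `∫ (x - p)/‖x - p‖ dμ(x) = 0`. -/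
theorem center_of_mass_inverse_distance
    {n : ℕ} (μ : Measure (EuclideanSpace ℝ (Fin n))) [IsFiniteMeasure μ]
    (hμ : μ ≠ 0) (hsupp : Bornology.IsBounded (measureSupport μ))
    (hatom : ∀ q : EuclideanSpace ℝ (Fin n), μ {q} = 0) :
    ∃ p ∈ closure (convexHull ℝ (measureSupport μ)),
      ∫ x, ‖x - p‖⁻¹ • (x - p) ∂μ = 0 := by
  have : NeZero μ := ⟨hμ⟩
  have : NullSingletonClass μ := ⟨hatom⟩
  exact measureSupport_eq_support μ ▸ center_of_mass_inverse_distance_general μ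
end

section
/- Let $n \geq 1$, let $x \in \mathbb{R}^n$ with $x \neq 0$, let $\nu \in \mathbb{R}^n$ with $\lVert \nu \rVert = 1$, and for $1 \leq i \leq n$ let $f_i(y) = y_i/\lVert y \rVert$. Then $\sum_{i=1}^{n} \big\lVert \nabla f_i(x) - \langle \nabla f_i(x), \nu \rangle\, \nu \big\rVert^2 = \frac{n-2}{\lVert x \rVert^2} + \frac{\langle x, \nu \rangle^2}{\lVert x \rVert^4} \leq \frac{n-1}{\lVert x \rVert^2}$, with equality if and only if $\nu = x/\lVert x \rVert$ or $\nu = -x/\lVert x \rVert$. -/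
open scoped RealInnerProductSpace

/-!
Write `P` and `Q` for the orthogonal projections onto the hyperplanes `xᗮ` and `νᗮ`. The gradient of
`⟪a, y⟫ / ‖y‖` at `x` is `‖x‖⁻¹ • P a`, so the sum in question is `‖x‖⁻²` times the squared
Hilbert–Schmidt norm of `Q ∘ P`. Since `‖Q (P a)‖² = ‖a‖² - ⟪x, a⟫² / ‖x‖² - ⟪P ν, a⟫²`, Parseval's
identity evaluates the latter as `n - 1 - ‖P ν‖² = n - 2 + ⟪x, ν⟫² / ‖x‖²`. The upper bound exceeds
the sum by `‖Q x‖² / ‖x‖⁴`, which vanishes exactly when `x` lies on the line spanned by `ν`.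
-/

section NormedSpace

variable {E : Type*} [NormedAddCommGroup E] [NormedSpace ℝ E]

lemma mem_span_singleton_iff_eq_inv_norm_smul_or_eq_neg {x ν : E} (hx : x ≠ 0) (hν : ‖ν‖ = 1) :
    x ∈ ℝ ∙ ν ↔ ν = ‖x‖⁻¹ • x ∨ ν = -(‖x‖⁻¹ • x) := by
  have hr : ‖x‖ ≠ 0 := norm_ne_zero_iff.mpr hx
  rw [Submodule.mem_span_singleton]
  constructor
  · rintro ⟨r, rfl⟩
    have hr₀ : r ≠ 0 := left_ne_zero_of_smul hx
    have hnorm : ‖r • ν‖ = |r| := by rw [norm_smul, hν, mul_one, Real.norm_eq_abs]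
    rw [hnorm]
    rcases abs_choice r with habs | habs <;> rw [habs]
    · exact .inl (inv_smul_smul₀ hr₀ ν).symm
    · exact .inr (by rw [inv_neg, neg_smul, neg_neg, inv_smul_smul₀ hr₀])
  · rintro (h | h)
    · exact ⟨‖x‖, by rw [h, smul_inv_smul₀ hr]⟩
    · exact ⟨-‖x‖, by rw [h, neg_smul_neg, smul_inv_smul₀ hr]⟩

end NormedSpace

section InnerProductSpace

variable {E : Type*} [NormedAddCommGroup E] [InnerProductSpace ℝ E]

lemma starProjection_orthogonal_singleton (x v : E) :
    (ℝ ∙ x)ᗮ.starProjection v = v - (⟪x, v⟫ / ‖x‖ ^ 2) • x := by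
  rw [Submodule.starProjection_orthogonal_val, Submodule.starProjection_singleton]
  rfl

lemma norm_starProjection_orthogonal_singleton_sq (x v : E) :
    ‖(ℝ ∙ x)ᗮ.starProjection v‖ ^ 2 = ‖v‖ ^ 2 - ⟪x, v⟫ ^ 2 / ‖x‖ ^ 2 := by
  have hpyth := Submodule.norm_sq_eq_add_norm_sq_starProjection v (ℝ ∙ x)
  have hline : ‖(ℝ ∙ x).starProjection v‖ ^ 2 = ⟪x, v⟫ ^ 2 / ‖x‖ ^ 2 := by
    rcases eq_or_ne x 0 with rfl | hx
    · simp
    · have hr : ‖x‖ ≠ 0 := norm_ne_zero_iff.mpr hx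
      rw [Submodule.starProjection_singleton, norm_smul, mul_pow, Real.norm_eq_abs, sq_abs]
      simp only [RCLike.ofReal_real_eq_id, id_eq]
      field_simp
  rw [hpyth, hline, add_sub_cancel_left]

lemma sum_norm_starProjection_orthogonal_singleton_comp_sq {ι : Type*} [Fintype ι]
    (b : OrthonormalBasis ι ℝ E) {x ν : E} (hx : x ≠ 0) (hν : ν ≠ 0) :
    ∑ i, ‖(ℝ ∙ ν)ᗮ.starProjection ((ℝ ∙ x)ᗮ.starProjection (b i))‖ ^ 2 =
      Fintype.card ι - 2 + ⟪x, ν⟫ ^ 2 / (‖x‖ ^ 2 * ‖ν‖ ^ 2) := by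
  have hrx : ‖x‖ ≠ 0 := norm_ne_zero_iff.mpr hx
  have hrν : ‖ν‖ ≠ 0 := norm_ne_zero_iff.mpr hν
  have hterm (i : ι) : ‖(ℝ ∙ ν)ᗮ.starProjection ((ℝ ∙ x)ᗮ.starProjection (b i))‖ ^ 2 =
      1 - ⟪x, b i⟫ ^ 2 / ‖x‖ ^ 2 - ⟪(ℝ ∙ x)ᗮ.starProjection ν, b i⟫ ^ 2 / ‖ν‖ ^ 2 := by
    rw [norm_starProjection_orthogonal_singleton_sq, norm_starProjection_orthogonal_singleton_sq,
      b.norm_eq_one, one_pow, Submodule.inner_starProjection_left_eq_right]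
  calc ∑ i, ‖(ℝ ∙ ν)ᗮ.starProjection ((ℝ ∙ x)ᗮ.starProjection (b i))‖ ^ 2
    _ = Fintype.card ι - ‖x‖ ^ 2 / ‖x‖ ^ 2 -
          ‖(ℝ ∙ x)ᗮ.starProjection ν‖ ^ 2 / ‖ν‖ ^ 2 := by
      simp only [hterm, Finset.sum_sub_distrib, ← Finset.sum_div, b.sum_sq_inner_left,
        Finset.sum_const, Finset.card_univ, nsmul_eq_mul, mul_one]
    _ = Fintype.card ι - 2 + ⟪x, ν⟫ ^ 2 / (‖x‖ ^ 2 * ‖ν‖ ^ 2) := by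
      rw [norm_starProjection_orthogonal_singleton_sq]
      field_simp
      ring

lemma hasFDerivAt_norm_of_ne_zero {x : E} (hx : x ≠ 0) :
    HasFDerivAt (fun y : E => ‖y‖) (‖x‖⁻¹ • innerSL ℝ x) x := by
  have hsqrt := (hasStrictFDerivAt_norm_sq x).hasFDerivAt.sqrt
    (pow_ne_zero 2 (norm_ne_zero_iff.mpr hx))
  simp only [Real.sqrt_sq (norm_nonneg _)] at hsqrt
  refine hsqrt.congr_fderiv ?_
  ext v
  simp only [one_div, mul_inv_rev, smul_apply, coe_innerSL_apply, nsmul_eq_mul, Nat.cast_ofNat,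
    smul_eq_mul]
  field_simp

variable [CompleteSpace E]

lemma hasGradientAt_inner_div_norm (a : E) {x : E} (hx : x ≠ 0) :
    HasGradientAt (fun y : E => ⟪a, y⟫ / ‖y‖) (‖x‖⁻¹ • (ℝ ∙ x)ᗮ.starProjection a) x := by
  have hr : ‖x‖ ≠ 0 := norm_ne_zero_iff.mpr hx
  have hquot := (innerSL ℝ a).hasFDerivAt.fun_mul
    ((hasDerivAt_inv hr).comp_hasFDerivAt x (hasFDerivAt_norm_of_ne_zero hx))
  rw [hasGradientAt_iff_hasFDerivAt, starProjection_orthogonal_singleton]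
  refine hquot.congr_fderiv ?_
  ext v
  simp only [coe_innerSL_apply, neg_smul, smul_neg, Function.comp_apply, add_apply, neg_apply,
    smul_apply, smul_eq_mul, real_inner_comm a x, map_smul, map_sub, sub_apply,
    InnerProductSpace.toDual_apply_apply]
  field_simp
  ring

lemma norm_tangential_gradient_inner_div_norm_sq (a : E) {x ν : E} (hx : x ≠ 0) (hν : ‖ν‖ = 1) :
    ‖gradient (fun y : E => ⟪a, y⟫ / ‖y‖) x
        - ⟪gradient (fun y : E => ⟪a, y⟫ / ‖y‖) x, ν⟫ • ν‖ ^ 2 =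
      ‖(ℝ ∙ ν)ᗮ.starProjection ((ℝ ∙ x)ᗮ.starProjection a)‖ ^ 2 / ‖x‖ ^ 2 := by
  have hproj (v : E) : v - ⟪v, ν⟫ • ν = (ℝ ∙ ν)ᗮ.starProjection v := by
    rw [starProjection_orthogonal_singleton, hν, one_pow, div_one, real_inner_comm]
  rw [hproj, (hasGradientAt_inner_div_norm a hx).gradient, map_smul, norm_smul, norm_inv,
    norm_norm, mul_pow, inv_pow, inv_mul_eq_div]

theorem sum_sq_tangential_gradient_coord_div_norm_general {ι : Type*} [Fintype ι]
    (b : OrthonormalBasis ι ℝ E) {x ν : E} (hx : x ≠ 0) (hν : ‖ν‖ = 1) :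
    (∑ i, ‖gradient (fun y : E => ⟪b i, y⟫ / ‖y‖) x
          - ⟪gradient (fun y : E => ⟪b i, y⟫ / ‖y‖) x, ν⟫ • ν‖ ^ 2
      = (Fintype.card ι - 2 : ℝ) / ‖x‖ ^ 2 + ⟪x, ν⟫ ^ 2 / ‖x‖ ^ 4) ∧
    ((Fintype.card ι - 2 : ℝ) / ‖x‖ ^ 2 + ⟪x, ν⟫ ^ 2 / ‖x‖ ^ 4
      ≤ (Fintype.card ι - 1 : ℝ) / ‖x‖ ^ 2) ∧
    ((Fintype.card ι - 2 : ℝ) / ‖x‖ ^ 2 + ⟪x, ν⟫ ^ 2 / ‖x‖ ^ 4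
        = (Fintype.card ι - 1 : ℝ) / ‖x‖ ^ 2
      ↔ ν = ‖x‖⁻¹ • x ∨ ν = -(‖x‖⁻¹ • x)) := by
  have hr : ‖x‖ ≠ 0 := norm_ne_zero_iff.mpr hx
  have hν₀ : ν ≠ 0 := by rintro rfl; simp at hν
  have hgap : (Fintype.card ι - 1 : ℝ) / ‖x‖ ^ 2 =
      (Fintype.card ι - 2 : ℝ) / ‖x‖ ^ 2 + ⟪x, ν⟫ ^ 2 / ‖x‖ ^ 4 +
        ‖(ℝ ∙ ν)ᗮ.starProjection x‖ ^ 2 / ‖x‖ ^ 4 := by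
    rw [norm_starProjection_orthogonal_singleton_sq, hν, real_inner_comm]
    field_simp
    ring
  refine ⟨?_, ?_, ?_⟩
  · simp only [norm_tangential_gradient_inner_div_norm_sq _ hx hν, ← Finset.sum_div,
      sum_norm_starProjection_orthogonal_singleton_comp_sq b hx hν₀, hν]
    field_simp
  · rw [hgap]
    exact le_add_of_nonneg_right (by positivity)
  · rw [hgap, left_eq_add, div_eq_zero_iff, or_iff_left (pow_ne_zero 4 hr),
      sq_eq_zero_iff, norm_eq_zero, Submodule.starProjection_apply_eq_zero_iff,
      Submodule.orthogonal_orthogonal, mem_span_singleton_iff_eq_inv_norm_smul_or_eq_neg hx hν]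

end InnerProductSpace

/-- For `f_i(y) = y_i/‖y‖`, a point `x ≠ 0` and a unit vector `ν`, the squared norms of
the tangential parts `∇ f_i(x) - ⟪∇ f_i(x), ν⟫ ν` sum to
`(n-2)/‖x‖² + ⟪x, ν⟫²/‖x‖⁴ ≤ (n-1)/‖x‖²`, with equality iff `ν = ±x/‖x‖`. -/
theorem sum_sq_tangential_gradient_coord_div_norm
    (n : ℕ) (hn : 1 ≤ n) (x ν : EuclideanSpace ℝ (Fin n)) (hx : x ≠ 0) (hν : ‖ν‖ = 1) :
    (∑ i : Fin n,
        ‖gradient (fun y : EuclideanSpace ℝ (Fin n) => y i / ‖y‖) x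
          - ⟪gradient (fun y : EuclideanSpace ℝ (Fin n) => y i / ‖y‖) x, ν⟫ • ν‖ ^ 2
      = (n - 2 : ℝ) / ‖x‖ ^ 2 + ⟪x, ν⟫ ^ 2 / ‖x‖ ^ 4) ∧
    ((n - 2 : ℝ) / ‖x‖ ^ 2 + ⟪x, ν⟫ ^ 2 / ‖x‖ ^ 4 ≤ (n - 1 : ℝ) / ‖x‖ ^ 2) ∧
    ((n - 2 : ℝ) / ‖x‖ ^ 2 + ⟪x, ν⟫ ^ 2 / ‖x‖ ^ 4 = (n - 1 : ℝ) / ‖x‖ ^ 2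
      ↔ ν = ‖x‖⁻¹ • x ∨ ν = -(‖x‖⁻¹ • x)) := by
  simpa [EuclideanSpace.inner_single_left] using
    sum_sq_tangential_gradient_coord_div_norm_general (EuclideanSpace.basisFun (Fin n) ℝ) hx hν
end
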